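/- arXiv:2405.19317 — 8 statements merged into one kernel-verified Lean document; each statement's English description precedes it below -/
import Mathlib

section
/- Let K ≥ 2 be an integer, let ã ∈ {1,…,K} be a distinguished index, let μ : {1,…,K} → ℝ satisfy μ_ã > μ_a for every a ≠ ã, and let σ_a > 0 and w_a > 0 for every a ∈ {1,…,K}. Then the infimum, over all ν : {1,…,K} → ℝ such that there exists b ≠ ã with ν_b ≥ ν_ã, of Σ_{a=1}^{K} w_a(μ_a − ν_a)²/(2σ_a²), equals min_{a ≠ ã} (μ_ã − μ_a)²/(2(σ_ã²/w_ã + σ_a²/w_a)), and this infimum is attained. -/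
lemma term_eq (w s x : ℝ) (hw : 0 < w) (hs : 0 < s) :
    w * x ^ 2 / (2 * s ^ 2) = x ^ 2 / (2 * (s ^ 2 / w)) := by
  field_simp

lemma two_arm (p q x y d : ℝ) (hp : 0 < p) (hq : 0 < q) (hd : 0 < d) (h : d ≤ x - y) :
    d ^ 2 / (2 * (p + q)) ≤ x ^ 2 / (2 * p) + y ^ 2 / (2 * q) := by
  have h1 : d ^ 2 / (2 * (p + q)) ≤ (x - y) ^ 2 / (2 * (p + q)) := by
    gcongr
  have h2 : x ^ 2 / (2 * p) + y ^ 2 / (2 * q) - (x - y) ^ 2 / (2 * (p + q))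
      = (q * x + p * y) ^ 2 / (2 * p * q * (p + q)) := by
    field_simp
    ring
  have h3 : 0 ≤ (q * x + p * y) ^ 2 / (2 * p * q * (p + q)) := by positivity
  linarith

/-- The infimum over alternative mean vectors `ν` whose best arm is not `atil`
of `Σ_a w_a (μ_a − ν_a)²/(2σ_a²)` equals
`min_{a ≠ atil} (μ_atil − μ_a)²/(2(σ_atil²/w_atil + σ_a²/w_a))`, and it is attained. -/
theorem stmt1 {K : ℕ} (hK : 2 ≤ K) (atil : Fin K) (μ σ w : Fin K → ℝ)
    (hμ : ∀ a : Fin K, a ≠ atil → μ a < μ atil)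
    (hσ : ∀ a, 0 < σ a) (hw : ∀ a, 0 < w a) :
    IsLeast
      { x : ℝ | ∃ ν : Fin K → ℝ, (∃ b : Fin K, b ≠ atil ∧ ν atil ≤ ν b) ∧
          x = ∑ a, w a * (μ a - ν a) ^ 2 / (2 * (σ a) ^ 2) }
      (⨅ a : {a : Fin K // a ≠ atil},
        (μ atil - μ (a : Fin K)) ^ 2 /
          (2 * ((σ atil) ^ 2 / w atil + (σ (a : Fin K)) ^ 2 / w (a : Fin K)))) := by
  have hpos : ∀ a, 0 < σ a ^ 2 / w a := fun a => div_pos (pow_pos (hσ a) 2) (hw a)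
  have hne : Nonempty {a : Fin K // a ≠ atil} := by
    have : Nontrivial (Fin K) := Fin.nontrivial_iff_two_le.mpr hK
    obtain ⟨b, hb⟩ := exists_ne atil
    exact ⟨⟨b, hb⟩⟩
  constructor
  · obtain ⟨⟨b, hb⟩, hmin⟩ := exists_eq_ciInf_of_finite
      (f := fun a : {a : Fin K // a ≠ atil} => (μ atil - μ (a : Fin K)) ^ 2 /
          (2 * ((σ atil) ^ 2 / w atil + (σ (a : Fin K)) ^ 2 / w (a : Fin K))))
    rw [← hmin]
    set p := σ atil ^ 2 / w atil with hp
    set q := σ b ^ 2 / w b with hq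
    have hp0 : 0 < p := hpos atil
    have hq0 : 0 < q := hpos b
    set m := (q * μ atil + p * μ b) / (p + q) with hm
    refine ⟨fun a => if a = atil ∨ a = b then m else μ a, ⟨b, hb, by simp⟩, ?_⟩
    rw [Fintype.sum_eq_add atil b hb.symm]
    · simp only [true_or, or_true, if_true]
      rw [term_eq _ _ _ (hw _) (hσ _), term_eq _ _ _ (hw _) (hσ _), ← hp, ← hq, hm]
      field_simp
      ring
    · rintro x ⟨h1, h2⟩
      simp [h1, h2]
  · rintro x ⟨ν, ⟨b, hb, hν⟩, rfl⟩
    refine (ciInf_le (Set.finite_range _).bddBelow ⟨b, hb⟩).trans ?_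
    refine (two_arm _ _ (μ atil - ν atil) (μ b - ν b) _ (hpos atil) (hpos b)
      (sub_pos.mpr (hμ b hb)) (by linarith)).trans ?_
    rw [← term_eq _ _ _ (hw _) (hσ _), ← term_eq _ _ _ (hw _) (hσ _)]
    rw [← Finset.sum_pair (f := fun a => w a * (μ a - ν a) ^ 2 / (2 * (σ a) ^ 2)) hb.symm]
    refine Finset.sum_le_sum_of_subset_of_nonneg (Finset.subset_univ _) ?_
    intro i _ _
    have := hw i
    positivity
end

section
/- Let K ≥ 2 be an integer, ã ∈ {1,…,K}, and σ_a > 0 for all a ∈ {1,…,K}; set S = sqrt(Σ_{b≠ã} σ_b²) and define the GNA weights by w^GNA_ã = σ_ã/(σ_ã + S) and w^GNA_a = σ_a²/(S(σ_ã + S)) for a ≠ ã. Then every w^GNA_a is strictly positive, Σ_{a=1}^{K} w^GNA_a = 1, and for every a ≠ ã one has σ_ã²/w^GNA_ã + σ_a²/w^GNA_a = (σ_ã + S)². -/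
/-- The GNA weights are positive, sum to one, and satisfy
`σ_atil²/w_atil + σ_a²/w_a = (σ_atil + S)²` for every `a ≠ atil`,
where `S = sqrt (Σ_{b ≠ atil} σ_b²)`. -/
theorem stmt2 {K : ℕ} (hK : 2 ≤ K) (atil : Fin K) (σ : Fin K → ℝ) (hσ : ∀ a, 0 < σ a) :
    let S : ℝ := Real.sqrt (∑ b ∈ Finset.univ.erase atil, (σ b) ^ 2)
    let w : Fin K → ℝ := fun a =>
      if a = atil then σ atil / (σ atil + S) else (σ a) ^ 2 / (S * (σ atil + S))
    (∀ a, 0 < w a) ∧ (∑ a, w a = 1) ∧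
    ∀ a : Fin K, a ≠ atil → (σ atil) ^ 2 / w atil + (σ a) ^ 2 / w a = (σ atil + S) ^ 2 := by
  intro S w
  have hpos : 0 < ∑ b ∈ Finset.univ.erase atil, (σ b) ^ 2 := by
    apply Finset.sum_pos
    · intro b _
      exact pow_pos (hσ b) 2
    · rw [← Finset.card_pos, Finset.card_erase_of_mem (Finset.mem_univ _), Finset.card_univ,
        Fintype.card_fin]
      omega
  have hS : 0 < S := Real.sqrt_pos.mpr hpos
  have hS2 : ∑ b ∈ Finset.univ.erase atil, (σ b) ^ 2 = S ^ 2 := (Real.sq_sqrt hpos.le).symm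
  have ht := hσ atil
  have hw1 : w atil = σ atil / (σ atil + S) := if_pos rfl
  have hw2 : ∀ a, a ≠ atil → w a = (σ a) ^ 2 / (S * (σ atil + S)) := fun a ha => if_neg ha
  clear_value w S
  refine ⟨?_, ?_, ?_⟩
  · intro a
    have ha := hσ a
    by_cases h : a = atil
    · rw [h, hw1]; positivity
    · rw [hw2 a h]; positivity
  · rw [← Finset.add_sum_erase _ _ (Finset.mem_univ atil), hw1,
      Finset.sum_congr rfl (fun a ha => hw2 a (Finset.ne_of_mem_erase ha)),
      ← Finset.sum_div, hS2]
    field_simp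
  · intro a h
    have ha := hσ a
    rw [hw1, hw2 a h]
    field_simp
end

section
/- Let K ≥ 2 be an integer, ã ∈ {1,…,K}, and σ_a > 0 for all a ∈ {1,…,K}; set S = sqrt(Σ_{b≠ã} σ_b²). Then for every w : {1,…,K} → ℝ with w_a > 0 for all a and Σ_{a=1}^{K} w_a = 1, there exists a ≠ ã such that σ_ã²/w_ã + σ_a²/w_a ≥ (σ_ã + S)². -/
/-- For every point `w` of the open probability simplex there is an arm
`a ≠ atil` with `σ_atil²/w_atil + σ_a²/w_a ≥ (σ_atil + S)²`,
where `S = sqrt (Σ_{b ≠ atil} σ_b²)`. -/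
theorem stmt4 {K : ℕ} (hK : 2 ≤ K) (atil : Fin K) (σ : Fin K → ℝ) (hσ : ∀ a, 0 < σ a) :
    let S : ℝ := Real.sqrt (∑ b ∈ Finset.univ.erase atil, (σ b) ^ 2)
    ∀ w : Fin K → ℝ, (∀ a, 0 < w a) → (∑ a, w a = 1) →
      ∃ a : Fin K, a ≠ atil ∧ (σ atil + S) ^ 2 ≤ (σ atil) ^ 2 / w atil + (σ a) ^ 2 / w a := by
  intro S w hw hsum
  have hS2 : S ^ 2 = ∑ b ∈ Finset.univ.erase atil, (σ b) ^ 2 :=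
    Real.sq_sqrt (Finset.sum_nonneg fun b _ => sq_nonneg _)
  have hsplit : w atil + ∑ b ∈ Finset.univ.erase atil, w b = 1 := by
    rw [Finset.add_sum_erase _ _ (Finset.mem_univ atil), hsum]
  have hne : (Finset.univ.erase atil).Nonempty := by
    rw [← Finset.card_pos, Finset.card_erase_of_mem (Finset.mem_univ _), Finset.card_univ,
      Fintype.card_fin]
    omega
  have hpos : 0 < ∑ b ∈ Finset.univ.erase atil, w b := Finset.sum_pos (fun b _ => hw b) hne
  generalize hy : ∑ b ∈ Finset.univ.erase atil, w b = y at hsplit hpos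
  obtain ⟨a, ha, hle⟩ : ∃ a ∈ Finset.univ.erase atil, S ^ 2 * w a ≤ σ a ^ 2 * y := by
    apply Finset.exists_le_of_sum_le hne
    rw [← Finset.mul_sum, ← Finset.sum_mul, hy, hS2]
  refine ⟨a, Finset.ne_of_mem_erase ha, ?_⟩
  have h1 : S ^ 2 / y ≤ σ a ^ 2 / w a := by
    rw [div_le_div_iff₀ hpos (hw a)]
    exact hle
  have hx := hw atil
  have h2 : (σ atil + S) ^ 2 ≤ σ atil ^ 2 / w atil + S ^ 2 / y := by
    have hyx : y = 1 - w atil := by linarith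
    rw [div_add_div _ _ hx.ne' hpos.ne', le_div_iff₀ (mul_pos hx hpos), hyx]
    nlinarith [sq_nonneg (σ atil * (1 - w atil) - S * w atil)]
  linarith
end

section
/- Let K ≥ 2 be an integer, ã ∈ {1,…,K}, and σ_a > 0 for all a ∈ {1,…,K}; set S = sqrt(Σ_{b≠ã} σ_b²). Then the supremum, over all w : {1,…,K} → ℝ with w_a > 0 for all a and Σ_a w_a = 1, of min_{a ≠ ã} 1/(2(σ_ã²/w_ã + σ_a²/w_a)), equals 1/(2(σ_ã + S)²), and this supremum is attained at the GNA weights w^GNA_ã = σ_ã/(σ_ã + S), w^GNA_a = σ_a²/(S(σ_ã + S)) for a ≠ ã. -/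
/-- The supremum over the open probability simplex of
`min_{a ≠ atil} 1/(2(σ_atil²/w_atil + σ_a²/w_a))` equals `1/(2(σ_atil + S)²)`,
and it is attained at the GNA weights. -/
theorem stmt5 {K : ℕ} (hK : 2 ≤ K) (atil : Fin K) (σ : Fin K → ℝ) (hσ : ∀ a, 0 < σ a) :
    let S : ℝ := Real.sqrt (∑ b ∈ Finset.univ.erase atil, (σ b) ^ 2)
    let wGNA : Fin K → ℝ := fun a =>
      if a = atil then σ atil / (σ atil + S) else (σ a) ^ 2 / (S * (σ atil + S))
    IsGreatest
      { x : ℝ | ∃ w : Fin K → ℝ, (∀ a, 0 < w a) ∧ (∑ a, w a = 1) ∧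
          x = ⨅ a : {a : Fin K // a ≠ atil},
            1 / (2 * ((σ atil) ^ 2 / w atil + (σ (a : Fin K)) ^ 2 / w (a : Fin K))) }
      (1 / (2 * (σ atil + S) ^ 2)) ∧
    (⨅ a : {a : Fin K // a ≠ atil},
        1 / (2 * ((σ atil) ^ 2 / wGNA atil + (σ (a : Fin K)) ^ 2 / wGNA (a : Fin K))))
      = 1 / (2 * (σ atil + S) ^ 2) := by
  intro S wGNA
  have hs := hσ atil
  obtain ⟨c, hc⟩ : ∃ c : Fin K, c ≠ atil := by
    haveI : Nontrivial (Fin K) := Fin.nontrivial_iff_two_le.mpr hK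
    exact exists_ne atil
  haveI : Nonempty {a : Fin K // a ≠ atil} := ⟨⟨c, hc⟩⟩
  have hne : (Finset.univ.erase atil : Finset (Fin K)).Nonempty := ⟨c, by simp [hc]⟩
  have hsum : 0 < ∑ b ∈ Finset.univ.erase atil, (σ b) ^ 2 :=
    Finset.sum_pos (fun b _ => pow_pos (hσ b) 2) hne
  have hS : 0 < S := Real.sqrt_pos.mpr hsum
  have hS2 : ∑ b ∈ Finset.univ.erase atil, (σ b) ^ 2 = S ^ 2 := (Real.sq_sqrt hsum.le).symm
  clear_value S
  have hval : (⨅ a : {a : Fin K // a ≠ atil},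
        1 / (2 * ((σ atil) ^ 2 / wGNA atil + (σ (a : Fin K)) ^ 2 / wGNA (a : Fin K))))
      = 1 / (2 * (σ atil + S) ^ 2) := by
    have h : ∀ a : {a : Fin K // a ≠ atil},
        1 / (2 * ((σ atil) ^ 2 / wGNA atil + (σ (a : Fin K)) ^ 2 / wGNA (a : Fin K)))
        = 1 / (2 * (σ atil + S) ^ 2) := by
      rintro ⟨a, ha⟩
      have hsa := hσ a
      have e : (σ atil) ^ 2 / wGNA atil + (σ a) ^ 2 / wGNA a = (σ atil + S) ^ 2 := by
        simp only [wGNA, if_neg ha, if_true]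
        field_simp
      simp only [e]
    rw [iInf_congr h, ciInf_const]
  refine ⟨⟨⟨wGNA, ?_, ?_, hval.symm⟩, ?_⟩, hval⟩
  · intro a
    have hsa := hσ a
    simp only [wGNA]
    split_ifs <;> positivity
  · rw [← Finset.add_sum_erase _ _ (Finset.mem_univ atil)]
    have e : ∑ a ∈ Finset.univ.erase atil, wGNA a
        = ∑ a ∈ Finset.univ.erase atil, (σ a) ^ 2 / (S * (σ atil + S)) := by
      apply Finset.sum_congr rfl
      intro a ha
      simp only [wGNA, if_neg (Finset.ne_of_mem_erase ha)]
    rw [e, ← Finset.sum_div, hS2]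
    simp only [wGNA, if_true]
    field_simp
  · rintro x ⟨w, hw, hw1, rfl⟩
    by_contra! hlt
    have hw0 := hw atil
    have hb : ∀ a ∈ Finset.univ.erase atil,
        (σ a) ^ 2 < w a * ((σ atil + S) ^ 2 - (σ atil) ^ 2 / w atil) := by
      intro a ha
      have hsa := hσ a
      have hwa := hw a
      have h1 := hlt.trans_le (ciInf_le (Set.finite_range _).bddBelow
        (⟨a, Finset.ne_of_mem_erase ha⟩ : {a : Fin K // a ≠ atil}))
      have h2 := (one_div_lt_one_div (by positivity) (by positivity)).mp h1
      have h3 : (σ a) ^ 2 / w a < (σ atil + S) ^ 2 - (σ atil) ^ 2 / w atil := by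
        simp only at h2
        linarith
      rw [div_lt_iff₀ hwa] at h3
      linarith
    have h4 := Finset.sum_lt_sum_of_nonempty hne hb
    rw [← Finset.sum_mul, hS2] at h4
    rw [← Finset.add_sum_erase _ _ (Finset.mem_univ atil)] at hw1
    rw [eq_sub_of_add_eq' hw1] at h4
    have h5 := mul_lt_mul_of_pos_right h4 hw0
    have h6 : (1 - w atil) * ((σ atil + S) ^ 2 - (σ atil) ^ 2 / w atil) * w atil
        = (1 - w atil) * ((σ atil + S) ^ 2 * w atil - (σ atil) ^ 2) := by
      field_simp
    rw [h6] at h5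
    nlinarith [sq_nonneg (σ atil * (1 - w atil) - S * w atil)]
end

section
/- Let (Ω, F, P) be a probability space, G ⊆ F a sub-σ-algebra, A ∈ F an event, and Y : Ω → ℝ an integrable random variable with 1_A·Y integrable. Let w be a G-measurable random variable with w ≥ δ almost surely for some constant δ > 0, let μ̂ be a bounded G-measurable random variable, and let μ ∈ ℝ be a constant. Assume E[1_A | G] = w almost surely and E[1_A·Y | G] = w·μ almost surely. Then E[ 1_A·(Y − μ̂)/w + μ̂ | G ] = μ almost surely. -/
open MeasureTheory

/-- Conditional unbiasedness of the A2IPW summand: if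
`E[1_A | G] = w` and `E[1_A·Y | G] = w·μ` a.s., with `w` `G`-measurable and bounded below by
`δ > 0`, and `μ̂` a bounded `G`-measurable plug-in, then
`E[1_A (Y − μ̂)/w + μ̂ | G] = μ` a.s. -/
theorem stmt14 {Ω : Type*} {m m0 : MeasurableSpace Ω} (hm : m ≤ m0)
    (P : Measure Ω) [IsProbabilityMeasure P]
    (A : Set Ω) (hA : MeasurableSet[m0] A)
    (Y : Ω → ℝ) (hYint : Integrable Y P)
    (hAYint : Integrable (fun ω => A.indicator (fun _ => (1 : ℝ)) ω * Y ω) P)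
    (w : Ω → ℝ) (hw : Measurable[m] w)
    (δ : ℝ) (hδ : 0 < δ) (hwδ : ∀ᵐ ω ∂P, δ ≤ w ω)
    (μhat : Ω → ℝ) (hμhat : Measurable[m] μhat)
    (Cμ : ℝ) (hμhatbdd : ∀ ω, |μhat ω| ≤ Cμ)
    (μc : ℝ)
    (hcond1 : P[A.indicator (fun _ => (1 : ℝ)) | m] =ᵐ[P] w)
    (hcond2 : P[fun ω => A.indicator (fun _ => (1 : ℝ)) ω * Y ω | m]
      =ᵐ[P] fun ω => w ω * μc) :
    P[fun ω => A.indicator (fun _ => (1 : ℝ)) ω * (Y ω - μhat ω) / w ω + μhat ω | m]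
      =ᵐ[P] fun _ => μc := by
  have hI : Integrable (A.indicator (fun _ => (1 : ℝ))) P :=
    (integrable_const (1 : ℝ)).indicator hA
  have hb1 : ∀ᵐ ω ∂P, ‖(w⁻¹) ω‖ ≤ δ⁻¹ := by
    filter_upwards [hwδ] with ω h
    have hp : 0 < w ω := lt_of_lt_of_le hδ h
    rw [Pi.inv_apply, Real.norm_eq_abs, abs_of_pos (inv_pos.mpr hp)]
    exact inv_anti₀ hδ h
  have hb2 : ∀ᵐ ω ∂P, ‖(w⁻¹ * μhat) ω‖ ≤ δ⁻¹ * Cμ := by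
    filter_upwards [hb1] with ω h
    rw [Pi.mul_apply, norm_mul]
    exact mul_le_mul h (hμhatbdd ω) (norm_nonneg _) (inv_pos.mpr hδ).le
  have hs0 : StronglyMeasurable[m] μhat := hμhat.stronglyMeasurable
  have hs1 : StronglyMeasurable[m] (w⁻¹) := hw.inv.stronglyMeasurable
  have hs2 : StronglyMeasurable[m] (w⁻¹ * μhat) := hs1.mul hs0
  have h1 := condExp_stronglyMeasurable_mul_of_bound hm hs1 hAYint _ hb1
  have h2 := condExp_stronglyMeasurable_mul_of_bound hm hs2 hI _ hb2
  have i1 := hAYint.bdd_mul (hs1.mono hm).aestronglyMeasurable hb1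
  have i2 := hI.bdd_mul (hs2.mono hm).aestronglyMeasurable hb2
  have i0 : Integrable μhat P :=
    Integrable.of_bound (hs0.mono hm).aestronglyMeasurable Cμ (ae_of_all _ hμhatbdd)
  have h0 : P[μhat | m] = μhat := condExp_of_stronglyMeasurable hm hs0 i0
  have e : (fun ω => A.indicator (fun _ => (1 : ℝ)) ω * (Y ω - μhat ω) / w ω + μhat ω)
      = (w⁻¹ * (fun ω => A.indicator (fun _ => (1 : ℝ)) ω * Y ω)
        - (w⁻¹ * μhat) * A.indicator (fun _ => (1 : ℝ))) + μhat := by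
    funext ω
    simp only [Pi.add_apply, Pi.sub_apply, Pi.mul_apply, Pi.inv_apply, div_eq_mul_inv]
    ring
  rw [e]
  have h3 := condExp_add (i1.sub i2) i0 m
  have h4 := condExp_sub i1 i2 m
  refine h3.trans ?_
  filter_upwards [h4, h1, h2, hcond1, hcond2, hwδ] with ω a4 a1 a2 c1 c2 hd
  have hp : w ω ≠ 0 := (lt_of_lt_of_le hδ hd).ne'
  rw [Pi.add_apply, h0]
  refine (congrArg (· + μhat ω) (a4.trans (congrArg₂ (· - ·) a1 a2))).trans ?_
  simp only [Pi.mul_apply, Pi.inv_apply, c1, c2]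
  field_simp
  ring
end

section
/- Let (Ω, F, P) be a probability space, G ⊆ F a sub-σ-algebra, A ∈ F an event, and Y : Ω → ℝ a random variable with 1_A·Y and 1_A·Y² integrable. Let w be a G-measurable random variable with w ≥ δ almost surely for some constant δ > 0, let μ̂ be a bounded G-measurable random variable, and let μ, σ ∈ ℝ be constants. Assume that almost surely E[1_A | G] = w, E[1_A·Y | G] = w·μ, and E[1_A·Y² | G] = w·(σ² + μ²). Then E[ (1_A·(Y − μ̂)/w)² | G ] = (σ² + (μ − μ̂)²)/w almost surely. -/
open MeasureTheory

/-- Conditional second-moment of the IPW term: under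
`E[1_A | G] = w`, `E[1_A·Y | G] = w·μ`, `E[1_A·Y² | G] = w(σ² + μ²)` a.s.,
one has `E[(1_A (Y − μ̂)/w)² | G] = (σ² + (μ − μ̂)²)/w` a.s. -/
theorem stmt15 {Ω : Type*} {m m0 : MeasurableSpace Ω} (hm : m ≤ m0)
    (P : Measure Ω) [IsProbabilityMeasure P]
    (A : Set Ω) (hA : MeasurableSet[m0] A)
    (Y : Ω → ℝ)
    (hAYint : Integrable (fun ω => A.indicator (fun _ => (1 : ℝ)) ω * Y ω) P)
    (hAY2int : Integrable (fun ω => A.indicator (fun _ => (1 : ℝ)) ω * (Y ω) ^ 2) P)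
    (w : Ω → ℝ) (hw : Measurable[m] w)
    (δ : ℝ) (hδ : 0 < δ) (hwδ : ∀ᵐ ω ∂P, δ ≤ w ω)
    (μhat : Ω → ℝ) (hμhat : Measurable[m] μhat)
    (Cμ : ℝ) (hμhatbdd : ∀ ω, |μhat ω| ≤ Cμ)
    (μc σc : ℝ)
    (hcond1 : P[A.indicator (fun _ => (1 : ℝ)) | m] =ᵐ[P] w)
    (hcond2 : P[fun ω => A.indicator (fun _ => (1 : ℝ)) ω * Y ω | m]
      =ᵐ[P] fun ω => w ω * μc)
    (hcond3 : P[fun ω => A.indicator (fun _ => (1 : ℝ)) ω * (Y ω) ^ 2 | m]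
      =ᵐ[P] fun ω => w ω * (σc ^ 2 + μc ^ 2)) :
    P[fun ω => (A.indicator (fun _ => (1 : ℝ)) ω * (Y ω - μhat ω) / w ω) ^ 2 | m]
      =ᵐ[P] fun ω => (σc ^ 2 + (μc - μhat ω) ^ 2) / w ω := by
  have hI : Integrable (A.indicator (fun _ => (1 : ℝ))) P :=
    (integrable_const (1 : ℝ)).indicator hA
  have hvm : Measurable[m] (fun ω => (w ω ^ 2)⁻¹) := (hw.pow_const 2).inv
  have hvb : ∀ᵐ ω ∂P, |(w ω ^ 2)⁻¹| ≤ (δ ^ 2)⁻¹ := by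
    filter_upwards [hwδ] with ω h
    rw [abs_of_nonneg (by positivity)]
    gcongr
  have hδ2 : 0 ≤ (δ ^ 2)⁻¹ := by positivity
  have key : ∀ (f : Ω → ℝ), Measurable[m] f → ∀ (C : ℝ), (∀ ω, |f ω| ≤ C) →
      ∀ (g : Ω → ℝ), Integrable g P →
      Integrable ((fun ω => (w ω ^ 2)⁻¹ * f ω) * g) P ∧
      P[(fun ω => (w ω ^ 2)⁻¹ * f ω) * g | m] =ᵐ[P]
        (fun ω => (w ω ^ 2)⁻¹ * f ω) * P[g | m] := by
    intro f hf C hC g hg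
    have hmeas : Measurable[m] (fun ω => (w ω ^ 2)⁻¹ * f ω) := hvm.mul hf
    have hb : ∀ᵐ ω ∂P, ‖(w ω ^ 2)⁻¹ * f ω‖ ≤ (δ ^ 2)⁻¹ * C := by
      filter_upwards [hvb] with ω h
      rw [Real.norm_eq_abs, abs_mul]
      exact mul_le_mul h (hC ω) (abs_nonneg _) hδ2
    exact ⟨hg.bdd_mul (hmeas.mono hm le_rfl).aestronglyMeasurable hb,
      condExp_stronglyMeasurable_mul_of_bound hm hmeas.stronglyMeasurable hg _ hb⟩
  obtain ⟨i1, e1⟩ := key (fun _ => 1) measurable_const 1 (by simp) _ hAY2int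
  obtain ⟨i2, e2⟩ := key (fun ω => -2 * μhat ω) (hμhat.const_mul _) (2 * Cμ)
    (fun ω => by rw [abs_mul]; norm_num; exact hμhatbdd ω) _ hAYint
  obtain ⟨i3, e3⟩ := key (fun ω => μhat ω ^ 2) (hμhat.pow_const 2) (Cμ ^ 2)
    (fun ω => by rw [abs_pow]; exact pow_le_pow_left₀ (abs_nonneg _) (hμhatbdd ω) 2) _ hI
  have hsum := (condExp_add (i1.add i2) i3 m).trans
    ((condExp_add i1 i2 m).add (Filter.EventuallyEq.refl _ _))
  refine Filter.EventuallyEq.trans (Filter.EventuallyEq.of_eq ?_) (hsum.trans ?_)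
  · congr 1
    funext ω
    simp only [Pi.add_apply, Pi.mul_apply]
    by_cases h : ω ∈ A <;> simp [h] <;> ring
  · filter_upwards [e1, e2, e3, hcond1, hcond2, hcond3, hwδ] with ω h1 h2 h3 c1 c2 c3 hd
    have hw0 : w ω ≠ 0 := (hδ.trans_le hd).ne'
    simp only [Pi.add_apply, Pi.mul_apply] at h1 h2 h3 ⊢
    rw [h1, h2, h3, c1, c2, c3]
    field_simp
    ring
end

section
/- Let (Ω, F, P) be a probability space, G ⊆ F a sub-σ-algebra, and A₁, A₂ ∈ F disjoint events. For i = 1, 2 let Y_i : Ω → ℝ be random variables with 1_{A_i}·Y_i and 1_{A_i}·Y_i² integrable, let w_i be G-measurable random variables with w_i ≥ δ almost surely for some constant δ > 0, let μ̂_i be bounded G-measurable random variables, and let μ_i, σ_i ∈ ℝ be constants. Assume that almost surely, for i = 1, 2: E[1_{A_i} | G] = w_i, E[1_{A_i}·Y_i | G] = w_i·μ_i, and E[1_{A_i}·Y_i² | G] = w_i·(σ_i² + μ_i²). Set Δ = μ₁ − μ₂ and ψ_i = 1_{A_i}·(Y_i − μ̂_i)/w_i + μ̂_i. Then almost surely E[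 (ψ₁ − ψ₂ − Δ)² | G ] = (σ₁² + (μ₁ − μ̂₁)²)/w₁ + (σ₂² + (μ₂ − μ̂₂)²)/w₂ − ((μ̂₁ − μ̂₂) − Δ)². -/
open MeasureTheory

/-- Measurable with respect to the sub-sigma-algebra and almost surely bounded. -/
def BddMeas {Ω : Type*} (m : MeasurableSpace Ω) {m0 : MeasurableSpace Ω} (P : Measure Ω)
    (a : Ω → ℝ) : Prop :=
  Measurable[m] a ∧ ∃ C : ℝ, ∀ᵐ ω ∂P, |a ω| ≤ C

theorem BddMeas.mul {Ω : Type*} {m m0 : MeasurableSpace Ω} {P : Measure Ω}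
    {a b : Ω → ℝ} (ha : BddMeas m P a) (hb : BddMeas m P b) :
    BddMeas m P (fun ω => a ω * b ω) := by
  obtain ⟨ha, C, hC⟩ := ha
  obtain ⟨hb, D, hD⟩ := hb
  refine ⟨Measurable.mul ha hb, C * D, ?_⟩
  filter_upwards [hC, hD] with ω h1 h2
  rw [abs_mul]
  exact mul_le_mul h1 h2 (abs_nonneg _) ((abs_nonneg _).trans h1)

theorem BddMeas.add {Ω : Type*} {m m0 : MeasurableSpace Ω} {P : Measure Ω}
    {a b : Ω → ℝ} (ha : BddMeas m P a) (hb : BddMeas m P b) :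
    BddMeas m P (fun ω => a ω + b ω) := by
  obtain ⟨ha, C, hC⟩ := ha
  obtain ⟨hb, D, hD⟩ := hb
  refine ⟨Measurable.add ha hb, C + D, ?_⟩
  filter_upwards [hC, hD] with ω h1 h2
  exact (abs_add_le _ _).trans (add_le_add h1 h2)

theorem BddMeas.const {Ω : Type*} {m m0 : MeasurableSpace Ω} {P : Measure Ω} (c : ℝ) :
    BddMeas m P (fun _ => c) :=
  ⟨measurable_const, |c|, Filter.Eventually.of_forall fun _ => le_rfl⟩

theorem BddMeas.inv {Ω : Type*} {m m0 : MeasurableSpace Ω} {P : Measure Ω} {w : Ω → ℝ}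
    (hw : Measurable[m] w) {δ : ℝ} (hδ : 0 < δ) (h : ∀ᵐ ω ∂P, δ ≤ w ω) :
    BddMeas m P (fun ω => (w ω)⁻¹) := by
  refine ⟨Measurable.inv hw, δ⁻¹, ?_⟩
  filter_upwards [h] with ω h1
  rw [abs_of_pos (inv_pos.2 (hδ.trans_le h1))]
  exact inv_anti₀ hδ h1

theorem BddMeas.pull {Ω : Type*} {m m0 : MeasurableSpace Ω} (hm : m ≤ m0) {P : Measure Ω}
    [IsProbabilityMeasure P] {a X g : Ω → ℝ} (ha : BddMeas m P a) (hX : Integrable X P)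
    (hg : P[X | m] =ᵐ[P] g) :
    Integrable (fun ω => a ω * X ω) P ∧
      P[fun ω => a ω * X ω | m] =ᵐ[P] fun ω => a ω * g ω := by
  obtain ⟨ha, C, hC⟩ := ha
  have hi : Integrable (fun ω => a ω * X ω) P :=
    hX.bdd_mul (c := C) (ha.mono hm le_rfl).aestronglyMeasurable hC
  refine ⟨hi, ?_⟩
  have h := condExp_mul_of_stronglyMeasurable_left (μ := P) (f := a) (g := X)
    (Measurable.stronglyMeasurable ha) hi hX
  refine Filter.EventuallyEq.trans h ?_
  filter_upwards [hg] with ω h1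
  simp [h1]

theorem condExp_add_pair {Ω : Type*} {m m0 : MeasurableSpace Ω} {P : Measure Ω}
    {f g f' g' : Ω → ℝ}
    (hf : Integrable f P ∧ P[f | m] =ᵐ[P] f') (hg : Integrable g P ∧ P[g | m] =ᵐ[P] g') :
    Integrable (fun ω => f ω + g ω) P ∧
      P[fun ω => f ω + g ω | m] =ᵐ[P] fun ω => f' ω + g' ω := by
  refine ⟨hf.1.add hg.1, (condExp_add hf.1 hg.1 m).trans ?_⟩
  filter_upwards [hf.2, hg.2] with ω h1 h2
  simp [h1, h2]

/-- Conditional variance identity for the difference of A2IPW summands of two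
disjoint arms: with `ψ_i = 1_{A_i}(Y_i − μ̂_i)/w_i + μ̂_i` and `Δ = μ₁ − μ₂`,
`E[(ψ₁ − ψ₂ − Δ)² | G] = (σ₁² + (μ₁ − μ̂₁)²)/w₁ + (σ₂² + (μ₂ − μ̂₂)²)/w₂ − ((μ̂₁ − μ̂₂) − Δ)²`
almost surely. -/
theorem stmt16 {Ω : Type*} {m m0 : MeasurableSpace Ω} (hm : m ≤ m0)
    (P : Measure Ω) [IsProbabilityMeasure P]
    (A₁ A₂ : Set Ω) (hA₁ : MeasurableSet[m0] A₁) (hA₂ : MeasurableSet[m0] A₂)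
    (hdisj : Disjoint A₁ A₂)
    (Y₁ Y₂ : Ω → ℝ)
    (hAY1 : Integrable (fun ω => A₁.indicator (fun _ => (1 : ℝ)) ω * Y₁ ω) P)
    (hAY1sq : Integrable (fun ω => A₁.indicator (fun _ => (1 : ℝ)) ω * (Y₁ ω) ^ 2) P)
    (hAY2 : Integrable (fun ω => A₂.indicator (fun _ => (1 : ℝ)) ω * Y₂ ω) P)
    (hAY2sq : Integrable (fun ω => A₂.indicator (fun _ => (1 : ℝ)) ω * (Y₂ ω) ^ 2) P)
    (w₁ w₂ : Ω → ℝ) (hw₁ : Measurable[m] w₁) (hw₂ : Measurable[m] w₂)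
    (δ : ℝ) (hδ : 0 < δ) (hw₁δ : ∀ᵐ ω ∂P, δ ≤ w₁ ω) (hw₂δ : ∀ᵐ ω ∂P, δ ≤ w₂ ω)
    (μhat₁ μhat₂ : Ω → ℝ) (hμhat₁ : Measurable[m] μhat₁) (hμhat₂ : Measurable[m] μhat₂)
    (Cμ : ℝ) (hμhat₁bdd : ∀ ω, |μhat₁ ω| ≤ Cμ) (hμhat₂bdd : ∀ ω, |μhat₂ ω| ≤ Cμ)
    (μ₁ μ₂ σ₁ σ₂ : ℝ)
    (hcond1₁ : P[A₁.indicator (fun _ => (1 : ℝ)) | m] =ᵐ[P] w₁)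
    (hcond1₂ : P[A₂.indicator (fun _ => (1 : ℝ)) | m] =ᵐ[P] w₂)
    (hcond2₁ : P[fun ω => A₁.indicator (fun _ => (1 : ℝ)) ω * Y₁ ω | m]
      =ᵐ[P] fun ω => w₁ ω * μ₁)
    (hcond2₂ : P[fun ω => A₂.indicator (fun _ => (1 : ℝ)) ω * Y₂ ω | m]
      =ᵐ[P] fun ω => w₂ ω * μ₂)
    (hcond3₁ : P[fun ω => A₁.indicator (fun _ => (1 : ℝ)) ω * (Y₁ ω) ^ 2 | m]
      =ᵐ[P] fun ω => w₁ ω * (σ₁ ^ 2 + μ₁ ^ 2))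
    (hcond3₂ : P[fun ω => A₂.indicator (fun _ => (1 : ℝ)) ω * (Y₂ ω) ^ 2 | m]
      =ᵐ[P] fun ω => w₂ ω * (σ₂ ^ 2 + μ₂ ^ 2)) :
    P[fun ω =>
        ((A₁.indicator (fun _ => (1 : ℝ)) ω * (Y₁ ω - μhat₁ ω) / w₁ ω + μhat₁ ω)
          - (A₂.indicator (fun _ => (1 : ℝ)) ω * (Y₂ ω - μhat₂ ω) / w₂ ω + μhat₂ ω)
          - (μ₁ - μ₂)) ^ 2 | m]
      =ᵐ[P] fun ω =>
        (σ₁ ^ 2 + (μ₁ - μhat₁ ω) ^ 2) / w₁ ω + (σ₂ ^ 2 + (μ₂ - μhat₂ ω) ^ 2) / w₂ ω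
          - ((μhat₁ ω - μhat₂ ω) - (μ₁ - μ₂)) ^ 2 := by
  have i1 : BddMeas m P (fun ω => (w₁ ω)⁻¹) := BddMeas.inv hw₁ hδ hw₁δ
  have i2 : BddMeas m P (fun ω => (w₂ ω)⁻¹) := BddMeas.inv hw₂ hδ hw₂δ
  have h1 : BddMeas m P μhat₁ := ⟨hμhat₁, Cμ, Filter.Eventually.of_forall hμhat₁bdd⟩
  have h2 : BddMeas m P μhat₂ := ⟨hμhat₂, Cμ, Filter.Eventually.of_forall hμhat₂bdd⟩
  have c : ∀ r : ℝ, BddMeas m P (fun _ => r) := fun r => BddMeas.const r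
  have hD : BddMeas m P (fun ω => (μhat₁ ω + (-1) * μhat₂ ω) + (-(μ₁ - μ₂))) :=
    (h1.add ((c (-1)).mul h2)).add (c _)
  have hI1 : Integrable (A₁.indicator (fun _ => (1 : ℝ))) P :=
    (integrable_const (1 : ℝ)).indicator hA₁
  have hI2 : Integrable (A₂.indicator (fun _ => (1 : ℝ))) P :=
    (integrable_const (1 : ℝ)).indicator hA₂
  have hone : P[(fun _ => (1 : ℝ)) | m] =ᵐ[P] fun _ => (1 : ℝ) := by
    rw [condExp_const hm]
  have t0 := (hD.mul hD).pull hm (integrable_const (1 : ℝ)) hone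
  have t1a := (i1.mul i1).pull hm hAY1sq hcond3₁
  have t1b := (((c (-2)).mul (h1.mul (i1.mul i1))).add ((c 2).mul (hD.mul i1))).pull hm
    hAY1 hcond2₁
  have t1c := (((h1.mul h1).mul (i1.mul i1)).add ((c (-2)).mul ((hD.mul h1).mul i1))).pull hm
    hI1 hcond1₁
  have t2a := (i2.mul i2).pull hm hAY2sq hcond3₂
  have t2b := (((c (-2)).mul (h2.mul (i2.mul i2))).add ((c (-2)).mul (hD.mul i2))).pull hm
    hAY2 hcond2₂
  have t2c := (((h2.mul h2).mul (i2.mul i2)).add ((c 2).mul ((hD.mul h2).mul i2))).pull hm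
    hI2 hcond1₂
  have key := (condExp_add_pair (condExp_add_pair (condExp_add_pair t1a t1b) t1c)
    (condExp_add_pair (condExp_add_pair (condExp_add_pair t2a t2b) t2c) t0)).2
  refine Filter.EventuallyEq.trans (Filter.EventuallyEq.of_eq ?_) (key.trans ?_)
  · congr 1
    funext ω
    by_cases ha : ω ∈ A₁
    · have hb : ω ∉ A₂ := fun hb => Set.disjoint_left.1 hdisj ha hb
      simp only [Set.indicator_of_mem ha, Set.indicator_of_notMem hb, div_eq_mul_inv]
      ring
    · by_cases hb : ω ∈ A₂
      · simp only [Set.indicator_of_notMem ha, Set.indicator_of_mem hb, div_eq_mul_inv]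
        ring
      · simp only [Set.indicator_of_notMem ha, Set.indicator_of_notMem hb, div_eq_mul_inv]
        ring
  · filter_upwards [hw₁δ, hw₂δ] with ω k1 k2
    have n1 : w₁ ω ≠ 0 := (hδ.trans_le k1).ne'
    have n2 : w₂ ω ≠ 0 := (hδ.trans_le k2).ne'
    field_simp
    ring
end

section
/- Let (Ω, F, P) be a probability space, G ⊆ F a sub-σ-algebra, and A₁, A₂ ∈ F disjoint events. For i = 1, 2 let Y_i : Ω → ℝ be random variables with 1_{A_i}·Y_i integrable, let w_i be G-measurable random variables with w_i ≥ δ almost surely for some constant δ > 0, let μ̂_i be bounded G-measurable random variables, and let μ_i ∈ ℝ be constants. Assume that almost surely, for i = 1, 2: E[1_{A_i} | G] = w_i and E[1_{A_i}·Y_i | G] = w_i·μ_i. Set Δ = μ₁ − μ₂ and ψ_i = 1_{A_i}·(Y_i − μ̂_i)/w_i + μ̂_i. Then E[ ψ₁ − ψ₂ − Δ | G ] = 0 almost surely. -/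
open MeasureTheory

lemma arm_aux {Ω : Type*} {m m0 : MeasurableSpace Ω} (hm : m ≤ m0)
    (P : Measure Ω) [IsProbabilityMeasure P]
    (A : Set Ω) (hA : MeasurableSet[m0] A) (Y : Ω → ℝ)
    (hAY : Integrable (fun ω => A.indicator (fun _ => (1 : ℝ)) ω * Y ω) P)
    (w : Ω → ℝ) (hw : Measurable[m] w)
    (δ : ℝ) (hδ : 0 < δ) (hwδ : ∀ᵐ ω ∂P, δ ≤ w ω)
    (u : Ω → ℝ) (hu : Measurable[m] u) (C : ℝ) (hub : ∀ ω, |u ω| ≤ C) (μ : ℝ)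
    (h1 : P[A.indicator (fun _ => (1 : ℝ)) | m] =ᵐ[P] w)
    (h2 : P[fun ω => A.indicator (fun _ => (1 : ℝ)) ω * Y ω | m] =ᵐ[P] fun ω => w ω * μ) :
    Integrable (fun ω => A.indicator (fun _ => (1 : ℝ)) ω * (Y ω - u ω) / w ω + u ω) P ∧
    P[fun ω => A.indicator (fun _ => (1 : ℝ)) ω * (Y ω - u ω) / w ω + u ω | m]
      =ᵐ[P] fun _ => μ := by
  have hwi : Measurable[m] (fun ω => (w ω)⁻¹) := hw.inv
  have hwu : Measurable[m] (fun ω => (w ω)⁻¹ * u ω) := hwi.mul hu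
  have hb1 : ∀ᵐ ω ∂P, ‖(w ω)⁻¹‖ ≤ δ⁻¹ := by
    filter_upwards [hwδ] with ω h
    rw [Real.norm_eq_abs, abs_of_pos (inv_pos.2 (hδ.trans_le h))]
    exact inv_anti₀ hδ h
  have hb2 : ∀ᵐ ω ∂P, ‖(w ω)⁻¹ * u ω‖ ≤ δ⁻¹ * C := by
    filter_upwards [hb1] with ω h
    rw [norm_mul]
    exact mul_le_mul h (hub ω) (norm_nonneg _) (inv_pos.2 hδ).le
  have hI : Integrable (A.indicator (fun _ => (1 : ℝ))) P := (integrable_const 1).indicator hA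
  have hui : Integrable u P :=
    Integrable.of_bound (hu.mono hm le_rfl).aestronglyMeasurable C (Filter.Eventually.of_forall hub)
  have i1 := hAY.bdd_mul (hwi.mono hm le_rfl).aestronglyMeasurable hb1
  have i2 := hI.bdd_mul (hwu.mono hm le_rfl).aestronglyMeasurable hb2
  have c1 := condExp_stronglyMeasurable_mul_of_bound hm hwi.stronglyMeasurable hAY _ hb1
  have c2 := condExp_stronglyMeasurable_mul_of_bound hm hwu.stronglyMeasurable hI _ hb2
  have e : (fun ω => A.indicator (fun _ => (1 : ℝ)) ω * (Y ω - u ω) / w ω + u ω)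
      = (((fun ω => (w ω)⁻¹) * (fun ω => A.indicator (fun _ => (1 : ℝ)) ω * Y ω))
        - ((fun ω => (w ω)⁻¹ * u ω) * A.indicator (fun _ => (1 : ℝ)))) + u := by
    funext ω
    simp only [Pi.add_apply, Pi.sub_apply, Pi.mul_apply]
    ring
  rw [e]
  refine ⟨(i1.sub i2).add hui, ?_⟩
  have cu : P[u | m] = u := condExp_of_stronglyMeasurable hm hu.stronglyMeasurable hui
  filter_upwards [condExp_add (i1.sub i2) hui m, condExp_sub i1 i2 m, c1, c2, h1, h2, hwδ]
    with ω a1 a2 a3 a4 a5 a6 a7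
  have hne : w ω ≠ 0 := (hδ.trans_le a7).ne'
  refine a1.trans ?_
  rw [Pi.add_apply, cu]
  refine (congrArg (· + u ω) (a2.trans (congrArg₂ (· - ·) a3 a4))).trans ?_
  simp only [Pi.mul_apply, a5, a6]
  field_simp
  ring

/-- The A2IPW difference is a (conditional) martingale difference:
with `ψ_i = 1_{A_i}(Y_i − μ̂_i)/w_i + μ̂_i` and `Δ = μ₁ − μ₂`,
`E[ψ₁ − ψ₂ − Δ | G] = 0` almost surely. -/
theorem stmt17 {Ω : Type*} {m m0 : MeasurableSpace Ω} (hm : m ≤ m0)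
    (P : Measure Ω) [IsProbabilityMeasure P]
    (A₁ A₂ : Set Ω) (hA₁ : MeasurableSet[m0] A₁) (hA₂ : MeasurableSet[m0] A₂)
    (hdisj : Disjoint A₁ A₂)
    (Y₁ Y₂ : Ω → ℝ)
    (hAY1 : Integrable (fun ω => A₁.indicator (fun _ => (1 : ℝ)) ω * Y₁ ω) P)
    (hAY2 : Integrable (fun ω => A₂.indicator (fun _ => (1 : ℝ)) ω * Y₂ ω) P)
    (w₁ w₂ : Ω → ℝ) (hw₁ : Measurable[m] w₁) (hw₂ : Measurable[m] w₂)
    (δ : ℝ) (hδ : 0 < δ) (hw₁δ : ∀ᵐ ω ∂P, δ ≤ w₁ ω) (hw₂δ : ∀ᵐ ω ∂P, δ ≤ w₂ ω)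
    (μhat₁ μhat₂ : Ω → ℝ) (hμhat₁ : Measurable[m] μhat₁) (hμhat₂ : Measurable[m] μhat₂)
    (Cμ : ℝ) (hμhat₁bdd : ∀ ω, |μhat₁ ω| ≤ Cμ) (hμhat₂bdd : ∀ ω, |μhat₂ ω| ≤ Cμ)
    (μ₁ μ₂ : ℝ)
    (hcond1₁ : P[A₁.indicator (fun _ => (1 : ℝ)) | m] =ᵐ[P] w₁)
    (hcond1₂ : P[A₂.indicator (fun _ => (1 : ℝ)) | m] =ᵐ[P] w₂)
    (hcond2₁ : P[fun ω => A₁.indicator (fun _ => (1 : ℝ)) ω * Y₁ ω | m]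
      =ᵐ[P] fun ω => w₁ ω * μ₁)
    (hcond2₂ : P[fun ω => A₂.indicator (fun _ => (1 : ℝ)) ω * Y₂ ω | m]
      =ᵐ[P] fun ω => w₂ ω * μ₂) :
    P[fun ω =>
        (A₁.indicator (fun _ => (1 : ℝ)) ω * (Y₁ ω - μhat₁ ω) / w₁ ω + μhat₁ ω)
          - (A₂.indicator (fun _ => (1 : ℝ)) ω * (Y₂ ω - μhat₂ ω) / w₂ ω + μhat₂ ω)
          - (μ₁ - μ₂) | m]
      =ᵐ[P] fun _ => 0 := by
  obtain ⟨i1, c1⟩ := arm_aux hm P A₁ hA₁ Y₁ hAY1 w₁ hw₁ δ hδ hw₁δ μhat₁ hμhat₁ Cμ hμhat₁bdd μ₁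
    hcond1₁ hcond2₁
  obtain ⟨i2, c2⟩ := arm_aux hm P A₂ hA₂ Y₂ hAY2 w₂ hw₂ δ hδ hw₂δ μhat₂ hμhat₂ Cμ hμhat₂bdd μ₂
    hcond1₂ hcond2₂
  have cc : P[fun _ : Ω => μ₁ - μ₂ | m] = fun _ => μ₁ - μ₂ := condExp_const hm _
  filter_upwards [condExp_sub (i1.sub i2) (integrable_const (μ₁ - μ₂)) m, condExp_sub i1 i2 m,
    c1, c2] with ω a1 a2 a3 a4
  refine a1.trans ?_
  rw [Pi.sub_apply, cc]
  refine (congrArg (· - (μ₁ - μ₂)) (a2.trans (congrArg₂ (· - ·) a3 a4))).trans ?_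
  simp
end
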